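/- For every m ≥ 0 and the binary word w = (000111)^m (the m-fold repetition of 000111), there exists r ≥ 0 such that occ(w, (0011)^r) = maxocc(w); that is, some most frequent subword of (000111)^m has the form (0011)^r. -/

import Mathlib

open List Real

/-- `occ w u` is the number of occurrences of `u` as a subword (subsequence) of `w`,
i.e. the multiplicity of `u` among the `2^|w|` sublists of `w`. -/
def occ {α : Type*} [DecidableEq α] (w u : List α) : ℕ := w.sublists.count u

/-- `maxocc w` is the maximal number of occurrences of any subword of `w`. -/
noncomputable def maxocc {α : Type*} [DecidableEq α] (w : List α) : ℕ :=
  sSup {n : ℕ | ∃ u : List α, occ w u = n}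

/-- `rep v m` is the concatenation of `m` copies of the word `v`. -/
def rep {α : Type*} (v : List α) (m : ℕ) : List α := (List.replicate m v).flatten

/-!
Write `w m = (000111)^m`. For every word `u` there is a polynomial `F` in one variable `y` with
coefficients in `ℕ` such that `occ (w m) u = ∑ j, (coeff F j) * (m choose j)` for all `m`; the
right-hand side is the additive functional `M m` below. The variable `y` marks the blocks `000111`
that an occurrence really uses. A run of length `a` contributes a factor `q a`, where
`∑ a, q a * t ^ a = s / (1 - y s)` with `s = (1 + t) ^ 3 - 1`, so that `q 1 = 3`, `q 2 = 3 + 9 y`,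
`q 3 = 1 + 18 y + 27 y ^ 2`. A pair of runs `0^a 1^b` multiplies `F` by `y (1 + y) (q a) (q b)`,
while an initial run of ones, or a final run of zeros, multiplies it by `y (q b)`. In particular
the polynomial of `(0011)^r` is `T ^ r` with `T = y (1 + y) (q 2) ^ 2`.

Order polynomials coefficientwise; `M m` is monotone. The theorem follows once each `F` is bounded
by a convex combination of powers of `T`, since then `occ (w m) u` is at most the largest of the
numbers `M m (T ^ r) = occ (w m) ((0011)^r)`. Such bounds are stable under products, so it is
enough to bound the factors: `q 1 ≤ q 2`, `q 3 ≤ (q 2 + q 2 * T) / 2`, `y * q 2 ≤ (1 + T) / 2`, and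
for `a ≥ 4` the recurrence `q a = y (3 q (a-1) + 3 q (a-2) + q (a-3))` together with `9 y ≤ T`
(the weight `7 / 9 < 1` leaves room) gives `q a ≤ q 2 * (combination of powers of T)`.
-/

open Polynomial

/-! ### Counting occurrences -/

section Occ

variable {α : Type*} [DecidableEq α]

lemma occ_nil_right (w : List α) : occ w [] = 1 := by
  unfold occ
  rw [(sublists_perm_sublists' w).count_eq]
  induction w with
  | nil => simp
  | cons a w ih =>
    rw [sublists'_cons, count_append, ih]
    simp [count_eq_zero]

lemma occ_nil_cons (b : α) (u : List α) : occ [] (b :: u) = 0 := by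
  simp [occ]

lemma occ_cons_cons (a b : α) (w u : List α) :
    occ (a :: w) (b :: u) = occ w (b :: u) + if a = b then occ w u else 0 := by
  unfold occ
  rw [(sublists_perm_sublists' _).count_eq, (sublists_perm_sublists' w).count_eq,
    (sublists_perm_sublists' w).count_eq, sublists'_cons, count_append]
  congr 1
  split_ifs with h
  · subst h
    exact count_map_of_injective _ _ (cons_injective) _
  · rw [count_eq_zero]
    simp [h]

lemma occ_skip (c : α) (w u : List α) (h : u.head? ≠ some c) : occ (c :: w) u = occ w u := by
  cases u with
  | nil => simp [occ_nil_right]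
  | cons b u =>
    rw [occ_cons_cons, if_neg, add_zero]
    rintro rfl
    simp at h

lemma occ_le (w u : List α) : occ w u ≤ w.sublists.length := count_le_length

end Occ

/-! ### The functional `M` and the run polynomials -/

/-- The functional `p ↦ ∑ j, (coeff p j) * (m choose j)`, defined through Pascal's rule. -/
noncomputable def M : ℕ → ℕ[X] → ℕ
  | 0, p => p.coeff 0
  | m + 1, p => M m p + M m p.divX

lemma M_add (m : ℕ) (p q : ℕ[X]) : M m (p + q) = M m p + M m q := by
  induction m generalizing p q with
  | zero => simp [M]
  | succ m ih => simp only [M, divX_add, ih]; ring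

lemma M_C_mul (m a : ℕ) (p : ℕ[X]) : M m (C a * p) = a * M m p := by
  induction m generalizing p with
  | zero => simp [M]
  | succ m ih => simp only [M, divX_C_mul, ih]; ring

lemma M_one (m : ℕ) : M m 1 = 1 := by
  induction m with
  | zero => simp [M]
  | succ m ih =>
    have h := M_C_mul m 0 0
    simp only [map_zero, zero_mul] at h
    simp [M, ih, h]

lemma M_X_mul_zero (p : ℕ[X]) : M 0 (X * p) = 0 := by simp [M]

lemma M_X_mul_succ (m : ℕ) (p : ℕ[X]) : M (m + 1) (X * p) = M m (X * p) + M m p := by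
  have h : (X * p).divX = p := by
    ext n
    simp [coeff_divX, coeff_X_mul]
  simp [M, h]

/-- The factor contributed by a run of length `a`; `q 0` is a placeholder. -/
noncomputable def q : ℕ → ℕ[X]
  | 0 => 0
  | 1 => 3
  | 2 => 3 + 9 * X
  | 3 => 1 + 18 * X + 27 * X ^ 2
  | n + 4 => X * (3 * q (n + 3) + 3 * q (n + 2) + q (n + 1))

/-- The polynomial of the word `0011`. -/
noncomputable def T : ℕ[X] := X * (1 + X) * (3 + 9 * X) ^ 2

lemma M_three_mul (m : ℕ) (p : ℕ[X]) : M m (3 * p) = 3 * M m p := M_C_mul m 3 p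

/-- Solution of the recursion for the number `f a m` of occurrences of `c^a u` in `w m`, where
`h m` counts the ways to place `u` once the run `c^a` has been finished. -/
lemma solve_run (f : ℕ → ℕ → ℕ) (h : ℕ → ℕ) (H : ℕ[X]) (hH : ∀ m, h m = M m H)
    (h0 : ∀ a, f (a + 1) 0 = 0)
    (h1 : ∀ m, f 1 (m + 1) = f 1 m + 3 * h m)
    (h2 : ∀ m, f 2 (m + 1) = f 2 m + 3 * f 1 m + 3 * h m)
    (h3 : ∀ m, f 3 (m + 1) = f 3 m + 3 * f 2 m + 3 * f 1 m + h m)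
    (h4 : ∀ a m, f (a + 4) (m + 1) =
      f (a + 4) m + 3 * f (a + 3) m + 3 * f (a + 2) m + f (a + 1) m) :
    ∀ a m, f (a + 1) m = M m (X * (q (a + 1) * H)) := by
  intro a
  induction a using Nat.strong_induction_on with
  | _ a ih =>
  intro m
  induction m with
  | zero => rw [h0, M_X_mul_zero]
  | succ m ihm =>
    rw [M_X_mul_succ, ← ihm]
    match a, ih with
    | 0, _ => rw [h1, hH, q, M_three_mul]
    | 1, ih =>
      have e : q 2 * H = 3 * (X * (q 1 * H)) + 3 * H := by simp only [q]; ring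
      rw [h2, hH, ih 0 (by omega), e, M_add, M_three_mul, M_three_mul]
      ring
    | 2, ih =>
      have e : q 3 * H = 3 * (X * (q 2 * H)) + 3 * (X * (q 1 * H)) + H := by
        simp only [q]; ring
      rw [h3, hH, ih 0 (by omega), ih 1 (by omega), e, M_add, M_add, M_three_mul, M_three_mul]
      ring
    | n + 3, ih =>
      have e : q (n + 4) * H = 3 * (X * (q (n + 3) * H)) + 3 * (X * (q (n + 2) * H))
          + X * (q (n + 1) * H) := by
        rw [q]; ring
      rw [h4, ih n (by omega), ih (n + 1) (by omega), ih (n + 2) (by omega), e, M_add, M_add,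
        M_three_mul, M_three_mul]
      ring

/-! ### The polynomial of a word -/

/-- The word `(000111)^m`. -/
abbrev w (m : ℕ) : List (Fin 2) := rep [0, 0, 0, 1, 1, 1] m

lemma w_succ (m : ℕ) : w (m + 1) = 0 :: 0 :: 0 :: 1 :: 1 :: 1 :: w m := by
  simp [w, rep, replicate_succ]

/-- `F` is the polynomial of the word `u`. -/
def Represents (F : ℕ[X]) (u : List (Fin 2)) : Prop := ∀ m, occ (w m) u = M m F

lemma represents_nil : Represents 1 [] := fun m => by rw [occ_nil_right, M_one]

lemma represents_zeros (u : List (Fin 2)) (hu : u.head? ≠ some 0) (H : ℕ[X])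
    (hH : ∀ m, occ (1 :: 1 :: 1 :: w m) u = M m H) (a : ℕ) :
    Represents (X * (q (a + 1) * H)) (replicate (a + 1) 0 ++ u) := by
  refine solve_run (fun a m => occ (w m) (replicate a 0 ++ u)) _ H hH ?_ ?_ ?_ ?_ ?_ a
  · intro a
    exact occ_nil_cons _ _
  all_goals
    intros
    simp [w_succ, replicate_succ, occ_cons_cons, occ_skip 0 _ u hu]
    try ring

lemma represents_ones (u : List (Fin 2)) (hu : u.head? ≠ some 1) (F : ℕ[X])
    (hF : Represents F u) (b : ℕ) :
    Represents (X * (q (b + 1) * F)) (replicate (b + 1) 1 ++ u) := by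
  refine solve_run (fun a m => occ (w m) (replicate a 1 ++ u)) _ F hF ?_ ?_ ?_ ?_ ?_ b
  · intro a
    exact occ_nil_cons _ _
  all_goals
    intros
    simp [w_succ, replicate_succ, occ_cons_cons, occ_skip 1 _ u hu]
    try ring

/-- Prepending a run of ones when the current block has only its ones left. -/
lemma occ_ones_half (u : List (Fin 2)) (hu : u.head? ≠ some 1) (F : ℕ[X])
    (hF : Represents F u) (b m : ℕ) :
    occ (1 :: 1 :: 1 :: w m) (replicate (b + 1) 1 ++ u) = M m ((1 + X) * (q (b + 1) * F)) := by
  have h := represents_ones u hu F hF b (m + 1)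
  have e : (1 + X) * (q (b + 1) * F) = X * (q (b + 1) * F) + q (b + 1) * F := by ring
  rw [M_X_mul_succ, ← M_add, ← e] at h
  rw [← h, w_succ]
  have h0 : (replicate (b + 1) 1 ++ u).head? ≠ some (0 : Fin 2) := by simp [replicate_succ]
  simp only [occ_skip 0 _ _ h0]

lemma represents_pair (u : List (Fin 2)) (hu : u.head? ≠ some 1) (F : ℕ[X])
    (hF : Represents F u) (a b : ℕ) :
    Represents (X * (q (a + 1) * ((1 + X) * (q (b + 1) * F))))
      (replicate (a + 1) 0 ++ (replicate (b + 1) 1 ++ u)) :=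
  represents_zeros _ (by simp [replicate_succ]) _ (occ_ones_half u hu F hF b) a

lemma represents_rep (r : ℕ) : Represents (T ^ r) (rep [0, 0, 1, 1] r) := by
  induction r with
  | zero => simpa [rep] using represents_nil
  | succ r ih =>
    have hu : (rep ([0, 0, 1, 1] : List (Fin 2)) r).head? ≠ some 1 := by
      cases r <;> simp [rep, replicate_succ]
    have h := represents_pair _ hu _ ih 1 1
    have e : X * (q (1 + 1) * ((1 + X) * (q (1 + 1) * T ^ r))) = T ^ (r + 1) := by
      rw [pow_succ]
      nth_rewrite 3 [T]
      simp only [q]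
      ring
    rw [e] at h
    simpa [rep, replicate_succ] using h

/-! ### Domination by convex combinations of powers of `T` -/

/-- `Dom g p`: coefficientwise, `p` is at most `g` times a combination of powers of `T` with
nonnegative weights of sum at most `1`. Denominators are cleared by `n`, the combination is
`c.comp T / n`, and `e` is the slack. -/
def Dom (g p : ℕ[X]) : Prop :=
  ∃ (n : ℕ) (c e : ℕ[X]), 0 < n ∧ c.eval 1 ≤ n ∧ C n * p + e = g * c.comp T

lemma Dom.mul {g p g' p' : ℕ[X]} (h : Dom g p) (h' : Dom g' p') : Dom (g * g') (p * p') := by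
  obtain ⟨n, c, e, hn, hc, he⟩ := h
  obtain ⟨n', c', e', hn', hc', he'⟩ := h'
  refine ⟨n * n', c * c', C n * p * e' + e * (C n' * p' + e'), Nat.mul_pos hn hn', ?_, ?_⟩
  · rw [eval_mul]
    exact Nat.mul_le_mul hc hc'
  · calc _ = (C n * p + e) * (C n' * p' + e') := by rw [C_mul]; ring
      _ = _ := by rw [he, he', mul_comp]; ring

lemma Dom.trans {g p g' : ℕ[X]} (h : Dom g p) (hg : Dom g' g) : Dom g' p := by
  obtain ⟨n, c, e, hn, hc, he⟩ := h
  obtain ⟨n', c', e', hn', hc', he'⟩ := hg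
  refine ⟨n * n', c * c', C n' * e + e' * c.comp T, Nat.mul_pos hn hn', ?_, ?_⟩
  · rw [eval_mul]
    exact Nat.mul_le_mul hc hc'
  · calc _ = C n' * (C n * p + e) + e' * c.comp T := by rw [C_mul]; ring
      _ = (C n' * g + e') * c.comp T := by rw [he]; ring
      _ = _ := by rw [he', mul_comp]; ring

lemma dom_T : Dom 1 T := ⟨1, X, 0, by simp, by simp, by simp⟩

lemma dom_one : Dom 1 1 := ⟨1, 1, 0, by simp, by simp, by simp⟩

lemma dom_q (a : ℕ) : Dom (q 2) (q (a + 1)) := by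
  induction a using Nat.strong_induction_on with
  | _ a ih =>
  match a, ih with
  | 0, _ =>
    refine ⟨1, 1, 9 * X, by simp, by simp, ?_⟩
    simp [q]
  | 1, _ => exact ⟨1, 1, 0, by simp, by simp, by simp⟩
  | 2, _ =>
    refine ⟨2, 1 + X, 1 + 216 * X ^ 2 + 972 * X ^ 3 + 1458 * X ^ 4 + 729 * X ^ 5, by simp,
      by simp, ?_⟩
    have h2 : (C 2 : ℕ[X]) = 2 := rfl
    simp only [q, T, h2, add_comp, one_comp, X_comp]
    ring
  | n + 3, ih =>
    obtain ⟨n₁, c₁, e₁, hn₁, hc₁, he₁⟩ := ih (n + 2) (by omega)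
    obtain ⟨n₂, c₂, e₂, hn₂, hc₂, he₂⟩ := ih (n + 1) (by omega)
    obtain ⟨n₃, c₃, e₃, hn₃, hc₃, he₃⟩ := ih n (by omega)
    -- `R` is the slack in `9 y ≤ T`.
    obtain ⟨R, hR⟩ : ∃ R : ℕ[X], T = 9 * X + R := by
      refine ⟨63 * X ^ 2 + 135 * X ^ 3 + 81 * X ^ 4, ?_⟩
      rw [T]; ring
    set c : ℕ[X] := C (3 * (n₂ * n₃)) * c₁ + C (3 * (n₁ * n₃)) * c₂ + C (n₁ * n₂) * c₃ with hc
    refine ⟨9 * (n₁ * n₂ * n₃), X * c,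
      9 * X * (C (3 * (n₂ * n₃)) * e₁ + C (3 * (n₁ * n₃)) * e₂ + C (n₁ * n₂) * e₃)
        + R * (q 2 * c.comp T), by positivity, ?_, ?_⟩
    · have k₁ := Nat.mul_le_mul_left (3 * (n₂ * n₃)) hc₁
      have k₂ := Nat.mul_le_mul_left (3 * (n₁ * n₃)) hc₂
      have k₃ := Nat.mul_le_mul_left (n₁ * n₂) hc₃
      simp only [hc, eval_mul, eval_add, eval_C, eval_X, one_mul]
      nlinarith [Nat.zero_le (n₁ * n₂ * n₃)]
    · have hcc : q 2 * c.comp T = C (3 * (n₂ * n₃)) * (C n₁ * q (n + 2 + 1) + e₁)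
          + C (3 * (n₁ * n₃)) * (C n₂ * q (n + 1 + 1) + e₂)
          + C (n₁ * n₂) * (C n₃ * q (n + 1) + e₃) := by
        rw [he₁, he₂, he₃, hc]
        simp only [add_comp, mul_comp, C_comp]
        ring
      have h3 : (C 3 : ℕ[X]) = 3 := rfl
      have h9 : (C 9 : ℕ[X]) = 9 := rfl
      have hq : q (n + 3 + 1) = X * (3 * q (n + 2 + 1) + 3 * q (n + 1 + 1) + q (n + 1)) := by
        rw [q]
      calc _ = 9 * X * (q 2 * c.comp T) + R * (q 2 * c.comp T) := by
            rw [hq]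
            nth_rewrite 2 [hcc]
            simp only [C_mul, h3, h9]
            ring
        _ = T * (q 2 * c.comp T) := by rw [hR]; ring
        _ = _ := by rw [mul_comp, X_comp]; ring

lemma dom_X_mul_q (a : ℕ) : Dom 1 (X * q (a + 1)) := by
  have h : Dom 1 (X * q 2) := by
    refine ⟨2, 1 + X, 1 + 3 * X + 45 * X ^ 2 + 135 * X ^ 3 + 81 * X ^ 4, by simp, by simp, ?_⟩
    have h2 : (C 2 : ℕ[X]) = 2 := rfl
    simp only [q, T, h2, add_comp, one_comp, X_comp]
    ring
  have hX : Dom X X := ⟨1, 1, 0, by simp, by simp, by simp⟩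
  exact (hX.mul (dom_q a)).trans h

lemma dom_pair (a b : ℕ) : Dom 1 (X * (1 + X) * (q (a + 1) * q (b + 1))) := by
  have hX : Dom (X * (1 + X)) (X * (1 + X)) := ⟨1, 1, 0, by simp, by simp, by simp⟩
  have hT : X * (1 + X) * (q 2 * q 2) = T := by simp only [q, T]; ring
  have h := hX.mul ((dom_q a).mul (dom_q b))
  rw [hT] at h
  exact h.trans dom_T

lemma Dom.M_le {p : ℕ[X]} (h : Dom 1 p) (m B : ℕ) (hB : ∀ r, M m (T ^ r) ≤ B) : M m p ≤ B := by
  obtain ⟨n, c, e, hn, hc, he⟩ := h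
  have key : ∀ c : ℕ[X], M m (c.comp T) ≤ c.eval 1 * B := by
    intro c
    induction c using Polynomial.induction_on' with
    | add p q hp hq =>
      rw [add_comp, M_add, eval_add, add_mul]
      exact add_le_add hp hq
    | monomial r a =>
      rw [monomial_comp, M_C_mul, eval_monomial, one_pow, mul_one]
      exact Nat.mul_le_mul_left _ (hB r)
  have h1 := congrArg (M m) he
  rw [M_add, M_C_mul, one_mul] at h1
  refine Nat.le_of_mul_le_mul_left ?_ hn
  calc n * M m p ≤ c.eval 1 * B := by have := key c; omega
    _ ≤ n * B := Nat.mul_le_mul_right _ hc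

/-- Splitting off the maximal initial run of the letter `c`. -/
lemma exists_run (c : Fin 2) (u : List (Fin 2)) :
    ∃ (a : ℕ) (v : List (Fin 2)), v.head? ≠ some c ∧ c :: u = replicate (a + 1) c ++ v := by
  induction u with
  | nil => exact ⟨0, [], by simp, by simp⟩
  | cons b u ih =>
    by_cases h : b = c
    · subst h
      obtain ⟨a, v, hv, e⟩ := ih
      exact ⟨a + 1, v, hv, by rw [e]; simp [replicate_succ]⟩
    · exact ⟨0, b :: u, by simpa using h, by simp⟩

lemma exists_dom (u : List (Fin 2)) : ∃ F, Dom 1 F ∧ Represents F u := by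
  induction hl : u.length using Nat.strong_induction_on generalizing u with
  | _ l ih =>
  subst hl
  match u, ih with
  | [], _ => exact ⟨1, dom_one, represents_nil⟩
  | 1 :: u, ih =>
    obtain ⟨b, v, hv, e⟩ := exists_run 1 u
    have hlen := congrArg List.length e
    rw [length_append, length_replicate] at hlen
    obtain ⟨F, hF, hr⟩ := ih v.length (by omega) v rfl
    rw [e]
    refine ⟨_, ?_, represents_ones v hv F hr b⟩
    simpa [mul_assoc] using (dom_X_mul_q b).mul hF
  | 0 :: u, ih =>
    obtain ⟨a, v, hv, e⟩ := exists_run 0 u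
    have hlen := congrArg List.length e
    rw [length_append, length_replicate] at hlen
    rw [e]
    match v, hv, hlen with
    | [], hv, _ =>
      refine ⟨_, ?_, represents_zeros [] hv 1 (fun m => by rw [occ_nil_right, M_one]) a⟩
      simpa using dom_X_mul_q a
    | 0 :: v, hv, _ => simp at hv
    | 1 :: v, _, hlen =>
      obtain ⟨b, v', hv', e'⟩ := exists_run 1 v
      have hlen' := congrArg List.length e'
      rw [length_append, length_replicate] at hlen'
      obtain ⟨F, hF, hr⟩ := ih v'.length (by omega) v' rfl
      rw [e']
      refine ⟨_, ?_, represents_pair v' hv' F hr a b⟩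
      have h := (dom_pair a b).mul hF
      rw [one_mul] at h
      convert h using 1
      ring

theorem stmt_15 (m : ℕ) :
    ∃ r : ℕ, occ (rep ([0, 0, 0, 1, 1, 1] : List (Fin 2)) m) (rep [0, 0, 1, 1] r) =
      maxocc (rep ([0, 0, 0, 1, 1, 1] : List (Fin 2)) m) := by
  -- A maximiser `r` exists because the values are bounded; it then beats every word.
  obtain ⟨r, hr⟩ : ∃ r, ∀ s, M m (T ^ s) ≤ M m (T ^ r) := by
    have hbdd : BddAbove (Set.range fun s => M m (T ^ s)) := by
      refine ⟨(w m).sublists.length, ?_⟩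
      rintro _ ⟨s, rfl⟩
      change M m (T ^ s) ≤ _
      rw [← represents_rep s m]
      exact occ_le _ _
    obtain ⟨r, hr⟩ := Nat.sSup_mem (Set.range_nonempty _) hbdd
    exact ⟨r, fun s => (le_csSup hbdd ⟨s, rfl⟩).trans hr.ge⟩
  have hmax : IsGreatest {n | ∃ u, occ (w m) u = n} (occ (w m) (rep [0, 0, 1, 1] r)) := by
    refine ⟨⟨_, rfl⟩, ?_⟩
    rintro _ ⟨u, rfl⟩
    obtain ⟨F, hF, hu⟩ := exists_dom u
    have h1 := hu m
    have h2 := represents_rep r m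
    rw [h1, h2]
    exact hF.M_le m _ hr
  exact ⟨r, hmax.csSup_eq.symm⟩
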